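/- Let Ω ⊆ ℝⁿ be an open domain, let M, P, Q satisfy conditions (M) and (Y) with P and Q additionally being N-functions, and let μ satisfy condition (μ). Assume the Hardy-type inequality (H): there are constants K, A > 0 such that ∫_Ω P(|∇φ|·|u|) dμ ≤ K·∫_Ω P(A·|∇u|) dμ for every u ∈ C₀^∞(Ω). Then there exists a constant L̃ > 0 (one may take L̃ = 2(L+2)√B, where L, B are the constants from the corresponding modular Gagliardo–Nirenberg inequality) such that for every u ∈ C₀^∞(Ω): ‖∇u‖_{L^M(Ω,μ)} ≤ L̃·√( ‖∇⁽²⁾u‖_{L^P(Ω,μ)} · ‖u‖_{L^Q(Ω,μ)} ). -/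

import Mathlib

/-!
Write `g(λ) = M(λ)/λ²`. Formally, integrating by parts against `e^{-φ} dx`,
`∫ M(|∇u|) dμ = ∫ g(|∇u|) ∇u · ∇u dμ = ∫ u g(|∇u|) ⟨∇u, ∇φ⟩ dμ - ∫ u div(g(|∇u|) ∇u) dμ`.
Convexity and the Δ₂-condition give `λ M'(λ) ≤ c M(λ)` (`CondM.deriv_bound`), whence
`|div(g(|∇u|) ∇u)| ≤ C g(|∇u|) |∇²u|`. The field `g(|∇u|) ∇u` need not be differentiable where
`∇u = 0`, so `|∇u|` is replaced by `√(|∇u|² + ε)` inside `g` (`basic_ineq`), and `ε` is sent to `0`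
after the Young inequality has been applied (`limit_reg`). The integration by parts (`ibp`) is the
one for Lipschitz functions: `e^{-φ}` agrees with a globally Lipschitz function on the support
of `u` (`exists_density`).

In the Young inequality `g(λ) v w ≤ M(λ) + P(v) + Q(w)` the left-hand side depends on `v` and `w`
only through `vw`, so it yields `g(λ) v w ≤ s⁻¹ (M(λ) + P(sτv) + Q(w/τ))` for all `s, τ > 0`
(`young_scaled`). It is used with `w = |u|` and with `v = C |∇²u|` and `v = |∇φ| |∇u|`. For `s = 4`
half of `∫ M(|∇u|) dμ` is absorbed on the left. The term `∫ P(4τ|∇φ||∇u|) dμ` is bounded by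
Hardy's inequality, applied to a multiple of each partial derivative `∂ᵢu`. The outcome
is the modular inequality
`∫ M(|∇u|) dμ ≤ L (∫ P(Bτ|∇²u|) dμ + ∫ Q(|u|/τ) dμ)` for every `τ > 0` (`modular`).

If `a` and `b` are admissible in the infima defining the Luxemburg norms of `∇²u` and of `u`, apply
it to `u/k`, with `k = √(Bab)` and `τ = k/(Ba)`: both modulars on the right are at most `1`, so
`∫ M(|∇u|/k) dμ ≤ 2L`, and by convexity `2Lk` is admissible for `∇u`. Letting `a` and `b` tend to
the infima concludes.
-/

open MeasureTheory Filter Set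

noncomputable section

/-- `E n` is the Euclidean space `ℝⁿ`. -/
abbrev E (n : ℕ) := EuclideanSpace ℝ (Fin n)

/-- An `N`-function: a continuous convex function `M : [0,∞) → [0,∞)` with `M(0) = 0`,
`lim_{λ→0} M(λ)/λ = 0` and `lim_{λ→∞} λ/M(λ) = 0`. -/
def IsNFunction (M : ℝ → ℝ) : Prop :=
  ContinuousOn M (Ici 0) ∧ ConvexOn ℝ (Ici 0) M ∧ M 0 = 0 ∧
  (∀ x ≥ (0:ℝ), 0 ≤ M x) ∧
  Tendsto (fun l => M l / l) (nhdsWithin 0 (Ioi 0)) (nhds 0) ∧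
  Tendsto (fun l => l / M l) atTop (nhds 0)

/-- The Δ₂-condition. -/
def Delta2 (M : ℝ → ℝ) : Prop := ∃ c > 0, ∀ l > (0:ℝ), M (2 * l) ≤ c * M l

/-- Condition (M): `M` is an `N`-function of class `C¹` on `(0,∞)` satisfying the
Δ₂-condition and such that `M'(λ)/λ` is bounded near zero. -/
def CondM (M : ℝ → ℝ) : Prop :=
  IsNFunction M ∧ ContDiffOn ℝ 1 M (Ioi 0) ∧ Delta2 M ∧
  ∃ ε > (0:ℝ), ∃ C : ℝ, ∀ l ∈ Ioo (0:ℝ) ε, deriv M l / l ≤ C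

/-- Condition (Y): `P, Q` are nonnegative nondecreasing measurable functions vanishing at `0`
such that the Young-type inequality `(M(u)/u²)·v·w ≤ M(u) + P(v) + Q(w)` holds. -/
def CondY (M P Q : ℝ → ℝ) : Prop :=
  Measurable P ∧ Measurable Q ∧ (∀ x ≥ (0:ℝ), 0 ≤ P x) ∧ (∀ x ≥ (0:ℝ), 0 ≤ Q x) ∧
  MonotoneOn P (Ici 0) ∧ MonotoneOn Q (Ici 0) ∧ P 0 = 0 ∧ Q 0 = 0 ∧
  ∀ u > (0:ℝ), ∀ v > (0:ℝ), ∀ w > (0:ℝ), M u / u ^ 2 * v * w ≤ M u + P v + Q w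

/-- `φ` is locally Lipschitz on `Ω`. -/
def LocLipschitzOn {α : Type*} [MetricSpace α] (Ω : Set α) (φ : α → ℝ) : Prop :=
  ∀ x ∈ Ω, ∃ s ∈ nhdsWithin x Ω, ∃ K : NNReal, LipschitzOnWith K φ s

/-- The measure `μ(dx) = e^{-φ(x)} dx` on the domain `Ω`. -/
def measOf {n : ℕ} (Ω : Set (E n)) (φ : E n → ℝ) : Measure (E n) :=
  (volume.restrict Ω).withDensity fun x => ENNReal.ofReal (Real.exp (-φ x))

/-- `u ∈ C₀^∞(Ω)`: smooth and compactly supported inside `Ω`. -/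
def TestFun {n : ℕ} (Ω : Set (E n)) (u : E n → ℝ) : Prop :=
  ContDiff ℝ (⊤ : ℕ∞) u ∧ HasCompactSupport u ∧ tsupport u ⊆ Ω

/-- The Hilbert–Schmidt norm of the Hessian of `u` at `x`. -/
def hessNormHS {n : ℕ} (u : E n → ℝ) (x : E n) : ℝ :=
  Real.sqrt (∑ i : Fin n, ∑ j : Fin n,
    (iteratedFDeriv ℝ 2 u x ![EuclideanSpace.single i (1:ℝ), EuclideanSpace.single j (1:ℝ)]) ^ 2)

/-- The Luxemburg norm `‖f‖_{L^R(μ)} = inf {K > 0 : ∫ R(|f|/K) dμ ≤ 1}`. -/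
def luxNorm {α : Type*} [MeasurableSpace α] (R : ℝ → ℝ) (μ : Measure α) (f : α → ℝ) : ℝ :=
  sInf {K : ℝ | 0 < K ∧ ∫ x, R (|f x| / K) ∂μ ≤ 1}

/-! ### Partial derivatives, gradient and Hessian -/

/-- The `i`-th partial derivative `∂ᵢu`. -/
def pd {n : ℕ} (u : E n → ℝ) (i : Fin n) (x : E n) : ℝ :=
  fderiv ℝ u x (EuclideanSpace.single i (1:ℝ))

lemma gradient_coord {n : ℕ} (u : E n → ℝ) (x : E n) (i : Fin n) :
    (gradient u x) i = pd u i x := by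
  rw [pd, ← inner_gradient_left, EuclideanSpace.inner_single_right]
  simp

lemma norm_gradient_sq {n : ℕ} (u : E n → ℝ) (x : E n) :
    ‖gradient u x‖ ^ 2 = ∑ i, pd u i x ^ 2 := by
  simp [EuclideanSpace.real_norm_sq_eq, gradient_coord]

lemma abs_pd_le {n : ℕ} (u : E n → ℝ) (x : E n) (i : Fin n) :
    |pd u i x| ≤ ‖gradient u x‖ := by
  rw [← gradient_coord, ← Real.norm_eq_abs]
  exact PiLp.norm_apply_le _ i

lemma contDiff_pd {n : ℕ} {u : E n → ℝ} (hu : ContDiff ℝ (⊤ : ℕ∞) u) (i : Fin n) :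
    ContDiff ℝ (⊤ : ℕ∞) (pd u i) := by
  unfold pd
  exact (hu.fderiv_right (by simp)).clm_apply contDiff_const

lemma TestFun.pd {n : ℕ} {Ω : Set (E n)} {u : E n → ℝ} (hu : TestFun Ω u) (i : Fin n) :
    TestFun Ω (pd u i) := by
  refine ⟨contDiff_pd hu.1 i, hu.2.1.fderiv_apply ℝ _, ?_⟩
  exact (tsupport_fderiv_apply_subset ℝ _).trans hu.2.2

lemma TestFun.const_mul {n : ℕ} {Ω : Set (E n)} {u : E n → ℝ} (hu : TestFun Ω u) (c : ℝ) :
    TestFun Ω (fun x => c * u x) := by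
  refine ⟨contDiff_const.mul hu.1, hu.2.1.mul_left, ?_⟩
  exact (tsupport_mul_subset_right).trans hu.2.2

lemma hess_entry {n : ℕ} {u : E n → ℝ} (hu : ContDiff ℝ (⊤ : ℕ∞) u) (i j : Fin n) (x : E n) :
    iteratedFDeriv ℝ 2 u x ![EuclideanSpace.single i (1:ℝ), EuclideanSpace.single j (1:ℝ)]
      = pd (pd u j) i x := by
  have h1 : DifferentiableAt ℝ (fderiv ℝ u) x :=
    (hu.fderiv_right (m := 1) (by norm_cast)).differentiable (by simp) x
  rw [iteratedFDeriv_two_apply]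
  unfold pd
  rw [fderiv_clm_apply h1 (by fun_prop)]
  simp

lemma hess_eq {n : ℕ} {u : E n → ℝ} (hu : ContDiff ℝ (⊤ : ℕ∞) u) (x : E n) :
    hessNormHS u x = Real.sqrt (∑ i, ∑ j, pd (pd u j) i x ^ 2) := by
  simp only [hessNormHS, hess_entry hu]

lemma hess_nonneg {n : ℕ} (u : E n → ℝ) (x : E n) : 0 ≤ hessNormHS u x := Real.sqrt_nonneg _

lemma abs_hess_entry_le {n : ℕ} {u : E n → ℝ} (hu : ContDiff ℝ (⊤ : ℕ∞) u) (i j : Fin n)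
    (x : E n) : |pd (pd u j) i x| ≤ hessNormHS u x := by
  rw [hess_eq hu]
  refine Real.abs_le_sqrt ?_
  refine le_trans ?_ (Finset.single_le_sum (f := fun i => ∑ j, pd (pd u j) i x ^ 2)
    (fun i _ => Finset.sum_nonneg fun j _ => sq_nonneg _) (Finset.mem_univ i))
  exact Finset.single_le_sum (f := fun j => pd (pd u j) i x ^ 2)
    (fun j _ => sq_nonneg _) (Finset.mem_univ j)

lemma norm_gradient_pd_le {n : ℕ} {u : E n → ℝ} (hu : ContDiff ℝ (⊤ : ℕ∞) u) (j : Fin n)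
    (x : E n) : ‖gradient (pd u j) x‖ ≤ hessNormHS u x := by
  rw [hess_eq hu]
  refine Real.le_sqrt_of_sq_le ?_
  rw [norm_gradient_sq]
  refine Finset.sum_le_sum fun i _ => ?_
  exact Finset.single_le_sum (f := fun j => pd (pd u j) i x ^ 2)
    (fun j _ => sq_nonneg _) (Finset.mem_univ j)

lemma continuous_hess {n : ℕ} {u : E n → ℝ} (hu : ContDiff ℝ (⊤ : ℕ∞) u) :
    Continuous (hessNormHS u) := by
  have : hessNormHS u = fun x => Real.sqrt (∑ i, ∑ j, pd (pd u j) i x ^ 2) :=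
    funext (hess_eq hu)
  rw [this]
  have h : ∀ i j, Continuous (pd (pd u j) i) := fun i j =>
    (contDiff_pd (contDiff_pd hu j) i).continuous
  fun_prop

lemma continuous_gradient {n : ℕ} {u : E n → ℝ} (hu : ContDiff ℝ (⊤ : ℕ∞) u) :
    Continuous (gradient u) := by
  unfold gradient
  exact (LinearIsometryEquiv.continuous _).comp (hu.continuous_fderiv (by simp))

lemma pd_eq_zero {n : ℕ} {u : E n → ℝ} {x : E n} (hx : x ∉ tsupport u) (i : Fin n) :
    pd u i x = 0 := by
  simp [pd, fderiv_of_notMem_tsupport ℝ hx]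

lemma gradient_eq_zero {n : ℕ} {u : E n → ℝ} {x : E n} (hx : x ∉ tsupport u) :
    gradient u x = 0 := by
  simp [gradient, fderiv_of_notMem_tsupport ℝ hx]

lemma hess_eq_zero {n : ℕ} {u : E n → ℝ} (hu : ContDiff ℝ (⊤ : ℕ∞) u) {x : E n}
    (hx : x ∉ tsupport u) : hessNormHS u x = 0 := by
  have h : ∀ i j, pd (pd u j) i x = 0 := fun i j =>
    pd_eq_zero (fun h => hx (tsupport_fderiv_apply_subset ℝ _ h)) i
  rw [hess_eq hu]
  simp [h]

/-- The gradient norm is at most `n` times the largest partial derivative. -/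
lemma norm_gradient_le_max {n : ℕ} (u : E n → ℝ) (x : E n) (h : gradient u x ≠ 0) :
    ∃ i : Fin n, ‖gradient u x‖ ≤ n * |pd u i x| := by
  have hne : Nonempty (Fin n) := by
    by_contra hn
    rw [not_nonempty_iff] at hn
    exact h (Subsingleton.elim _ _)
  obtain ⟨i, -, hi⟩ := Finset.exists_max_image Finset.univ (fun i => |pd u i x|)
    Finset.univ_nonempty
  refine ⟨i, ?_⟩
  refine abs_le_of_sq_le_sq' ?_ (by positivity) |>.2
  rw [norm_gradient_sq, mul_pow]
  calc ∑ j, pd u j x ^ 2 ≤ ∑ j : Fin n, |pd u i x| ^ 2 :=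
        Finset.sum_le_sum fun j hj => by
          rw [← sq_abs]; exact pow_le_pow_left₀ (abs_nonneg _) (hi j hj) 2
    _ = n * |pd u i x| ^ 2 := by simp
    _ ≤ (n:ℝ) ^ 2 * |pd u i x| ^ 2 := by
        gcongr
        have : 1 ≤ n := Nat.one_le_iff_ne_zero.2 (by rintro rfl; exact hne.elim fun i => i.elim0)
        have : (1:ℝ) ≤ n := by exact_mod_cast this
        nlinarith

lemma pd_const_mul {n : ℕ} {u : E n → ℝ} (hu : Differentiable ℝ u) (c : ℝ) (i : Fin n) :
    pd (fun x => c * u x) i = fun x => c * pd u i x := by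
  funext x
  simp [pd, fderiv_const_mul (hu x)]

lemma norm_gradient_const_mul {n : ℕ} {u : E n → ℝ} (hu : Differentiable ℝ u) (c : ℝ) (x : E n) :
    ‖gradient (fun x => c * u x) x‖ = |c| * ‖gradient u x‖ := by
  rw [← abs_of_nonneg (norm_nonneg (gradient (fun x => c * u x) x)),
    ← abs_of_nonneg (norm_nonneg (gradient u x)), ← abs_mul, ← sq_eq_sq_iff_abs_eq_abs,
    mul_pow, norm_gradient_sq, norm_gradient_sq, Finset.mul_sum]
  simp_rw [pd_const_mul hu, mul_pow]

lemma hess_const_mul {n : ℕ} {u : E n → ℝ} (hu : ContDiff ℝ (⊤ : ℕ∞) u) (c : ℝ) (x : E n) :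
    hessNormHS (fun x => c * u x) x = |c| * hessNormHS u x := by
  have hd : ∀ j, Differentiable ℝ (pd u j) := fun j => (contDiff_pd hu j).differentiable (by simp)
  rw [hess_eq hu, hess_eq (contDiff_const.mul hu), ← Real.sqrt_sq_eq_abs,
    ← Real.sqrt_mul (sq_nonneg c), Finset.mul_sum]
  simp_rw [pd_const_mul (hu.differentiable (by simp)), pd_const_mul (hd _), mul_pow,
    Finset.mul_sum]

/-! ### Integration against the weighted measure -/

/-- On a compact subset `S` of `Ω` the density `e^{-φ}` agrees with a globally Lipschitz function
`ρ`, which has the expected gradient wherever `φ` is differentiable. -/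
lemma exists_density {n : ℕ} {Ω : Set (E n)} (hΩ : IsOpen Ω) {φ : E n → ℝ}
    (hφ : LocLipschitzOn Ω φ) {S : Set (E n)} (hS : IsCompact S) (hSΩ : S ⊆ Ω) :
    ∃ (ρ : E n → ℝ) (D : NNReal) (C : NNReal), LipschitzWith D ρ ∧
      (∀ x ∈ S, ρ x = Real.exp (-φ x)) ∧
      (∀ x ∈ S, ∀ g, HasGradientAt φ g x → ‖g‖ ≤ C ∧ HasGradientAt ρ (-(ρ x) • g) x) := by
  obtain ⟨N, hN, hSN, hNΩ⟩ := exists_compact_between hS hΩ hSΩ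
  have h1 : LocallyLipschitzOn N φ := fun x hx => by
    obtain ⟨s, hs, K, hK⟩ := hφ x (hNΩ hx)
    exact ⟨K, s, nhdsWithin_mono _ hNΩ hs, hK⟩
  obtain ⟨C, hC⟩ := h1.exists_lipschitzOnWith_of_compact hN
  obtain ⟨ψ, hψ, hψe⟩ := hC.extend_real
  have h2 : LocallyLipschitz (fun x => Real.exp (-ψ x)) := by
    have : ContDiff ℝ 1 (fun t : ℝ => Real.exp (-t)) := by fun_prop
    exact this.locallyLipschitz.comp hψ.locallyLipschitz
  obtain ⟨D, hD⟩ := (h2.locallyLipschitzOn (s := N)).exists_lipschitzOnWith_of_compact hN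
  obtain ⟨ρ, hρ, hρe⟩ := hD.extend_real
  have hρφ : ∀ x ∈ N, ρ x = Real.exp (-φ x) := fun x hx => by
    rw [← hρe hx]; simp only; rw [hψe hx]
  refine ⟨ρ, D, C, hρ, fun x hx => hρφ x (interior_subset (hSN hx)), fun x hx g hg => ?_⟩
  have hNx : N ∈ nhds x := mem_interior_iff_mem_nhds.1 (hSN hx)
  constructor
  · have := norm_fderiv_le_of_lipschitzOn ℝ hNx hC
    rw [hg.hasFDerivAt.fderiv] at this
    simpa using this
  · have h3 : HasFDerivAt (fun x => Real.exp (-φ x)) _ x := hg.hasFDerivAt.neg.exp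
    have h4 : ρ =ᶠ[nhds x] fun x => Real.exp (-φ x) := by
      filter_upwards [hNx] with y hy using hρφ y hy
    rw [hasGradientAt_iff_hasFDerivAt]
    refine (h3.congr_of_eventuallyEq h4).congr_fderiv ?_
    rw [hρφ x (mem_of_mem_nhds hNx)]
    ext v
    simp

lemma aemeasurable_density {n : ℕ} {Ω : Set (E n)} (hΩ : IsOpen Ω) {φ : E n → ℝ}
    (hφ : LocLipschitzOn Ω φ) :
    AEMeasurable (fun x => ENNReal.ofReal (Real.exp (-φ x))) (volume.restrict Ω) := by
  have hc : ContinuousOn φ Ω := by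
    have : LocallyLipschitzOn Ω φ := fun x hx => by
      obtain ⟨s, hs, K, hK⟩ := hφ x hx
      exact ⟨K, s, hs, hK⟩
    exact this.continuousOn
  exact (hc.neg.rexp.aemeasurable hΩ.measurableSet).ennreal_ofReal

/-- Integrals against `μ` of functions supported in a compact `S ⊆ Ω` are Lebesgue integrals with
weight `ρ`. -/
lemma integral_measOf {n : ℕ} {Ω : Set (E n)} (hΩ : IsOpen Ω) {φ : E n → ℝ}
    (hφ : LocLipschitzOn Ω φ) {S : Set (E n)} (hSΩ : S ⊆ Ω)
    {ρ : E n → ℝ} (hρ : ∀ x ∈ S, ρ x = Real.exp (-φ x)) {f : E n → ℝ}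
    (hf : ∀ x, x ∉ S → f x = 0) :
    ∫ x, f x ∂(measOf Ω φ) = ∫ x, ρ x * f x := by
  rw [measOf, integral_withDensity_eq_integral_toReal_smul₀ (aemeasurable_density hΩ hφ)
    (by simp)]
  have h1 : ∀ x, (ENNReal.ofReal (Real.exp (-φ x))).toReal • f x = ρ x * f x := fun x => by
    by_cases hx : x ∈ S
    · rw [ENNReal.toReal_ofReal (Real.exp_pos _).le, hρ x hx, smul_eq_mul]
    · simp [hf x hx]
  simp_rw [h1]
  exact setIntegral_eq_integral_of_forall_compl_eq_zero fun x hx => by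
    rw [hf x (fun h => hx (hSΩ h)), mul_zero]

lemma measOf_compact_lt_top {n : ℕ} {Ω : Set (E n)} (hΩ : IsOpen Ω) {φ : E n → ℝ}
    (hφ : LocLipschitzOn Ω φ) {S : Set (E n)} (hS : IsCompact S) (hSΩ : S ⊆ Ω) :
    measOf Ω φ S < ⊤ := by
  obtain ⟨ρ, D, C, hD, hρ, -⟩ := exists_density hΩ hφ hS hSΩ
  rw [measOf, withDensity_apply _ hS.measurableSet, Measure.restrict_restrict hS.measurableSet,
    inter_eq_left.2 hSΩ]
  rw [setLIntegral_congr_fun (g := fun x => ENNReal.ofReal (ρ x)) hS.measurableSet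
    (fun x hx => by simp only; rw [hρ x hx])]
  exact (hD.continuous.continuousOn.integrableOn_compact hS).lintegral_lt_top

lemma measOf_ac {n : ℕ} (Ω : Set (E n)) (φ : E n → ℝ) :
    measOf Ω φ ≪ volume.restrict Ω := withDensity_absolutelyContinuous _ _

/-- Integration by parts against `μ`: `∫ ∂ᵢF dμ = ∫ F ∂ᵢφ dμ`. -/
lemma ibp {n : ℕ} {Ω : Set (E n)} (hΩ : IsOpen Ω) {φ : E n → ℝ}
    (hφ : LocLipschitzOn Ω φ) {φ' : E n → E n}
    (hφ' : ∀ᵐ x ∂(volume.restrict Ω), HasGradientAt φ (φ' x) x)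
    {F : E n → ℝ} (hF : ContDiff ℝ 1 F) (hFc : HasCompactSupport F) (hFΩ : tsupport F ⊆ Ω)
    (i : Fin n) :
    ∫ x, pd F i x ∂(measOf Ω φ) = ∫ x, F x * φ' x i ∂(measOf Ω φ) := by
  obtain ⟨ρ, D, C, hD, hρ, hg⟩ := exists_density hΩ hφ hFc hFΩ
  rw [integral_measOf hΩ hφ hFΩ hρ (fun x hx => pd_eq_zero hx i),
    integral_measOf hΩ hφ hFΩ hρ (fun x hx => by rw [image_eq_zero_of_notMem_tsupport hx, zero_mul])]
  obtain ⟨D', hD'⟩ := hF.lipschitzWith_of_hasCompactSupport hFc (by simp)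
  have key := hD.integral_lineDeriv_mul_eq (μ := volume) hD' hFc (EuclideanSpace.single i (1:ℝ))
  have h1 : ∀ x, lineDeriv ℝ F x (-EuclideanSpace.single i (1:ℝ)) * ρ x = -(ρ x * pd F i x) :=
    fun x => by
      rw [(hF.differentiable (by simp) x).lineDeriv_eq_fderiv, map_neg, pd]; ring
  have h2 : ∀ᵐ x, lineDeriv ℝ ρ x (EuclideanSpace.single i (1:ℝ)) * F x
      = -(ρ x * (F x * φ' x i)) := by
    rw [ae_restrict_iff' hΩ.measurableSet] at hφ'
    filter_upwards [hφ'] with x hx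
    by_cases hxS : x ∈ tsupport F
    · have h3 := (hg x hxS _ (hx (hFΩ hxS))).2
      rw [h3.differentiableAt.lineDeriv_eq_fderiv, h3.fderiv_apply]
      simp [EuclideanSpace.inner_single_right]
      ring
    · simp [image_eq_zero_of_notMem_tsupport hxS]
  simp_rw [h1] at key
  rw [integral_congr_ae h2, integral_neg, integral_neg] at key
  linarith

/-! ### N-functions and the weight -/

lemma IsNFunction.mul_le {M : ℝ → ℝ} (hM : IsNFunction M) {s x : ℝ} (hs : 0 ≤ s) (hs1 : s ≤ 1)
    (hx : 0 ≤ x) : M (s * x) ≤ s * M x := by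
  have := hM.2.1.2 (x := x) (y := 0) hx (le_refl (0:ℝ)) hs (sub_nonneg.2 hs1) (by ring)
  simpa [hM.2.2.1] using this

lemma IsNFunction.mono {M : ℝ → ℝ} (hM : IsNFunction M) {x y : ℝ} (hx : 0 ≤ x) (hxy : x ≤ y) :
    M x ≤ M y := by
  rcases hx.eq_or_lt with rfl | hx0
  · rw [hM.2.2.1]; exact hM.2.2.2.1 y hxy
  have hy : 0 < y := hx0.trans_le hxy
  have h := hM.mul_le (s := x / y) (by positivity) ((div_le_one hy).2 hxy) hy.le
  rw [div_mul_cancel₀ _ hy.ne'] at h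
  exact h.trans (mul_le_of_le_one_left (hM.2.2.2.1 y hy.le) ((div_le_one hy).2 hxy))

lemma IsNFunction.continuous_comp {M : ℝ → ℝ} (hM : IsNFunction M) {α : Type*}
    [TopologicalSpace α] {f : α → ℝ} (hf : Continuous f) (h0 : ∀ x, 0 ≤ f x) :
    Continuous fun x => M (f x) :=
  hM.1.comp_continuous hf h0

lemma CondM.hasDerivAt {M : ℝ → ℝ} (hM : CondM M) {l : ℝ} (hl : 0 < l) :
    HasDerivAt M (deriv M l) l :=
  ((hM.2.1.differentiableOn (by simp)).differentiableAt (Ioi_mem_nhds hl)).hasDerivAt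

/-- Convexity and the Δ₂-condition give `λ M'(λ) ≤ c M(λ)`. -/
lemma CondM.deriv_bound {M : ℝ → ℝ} (hM : CondM M) :
    ∃ c ≥ 0, ∀ l > 0, |deriv M l| * l ≤ c * M l := by
  obtain ⟨c, hc, h2⟩ := hM.2.2.1
  refine ⟨c, hc.le, fun l hl => ?_⟩
  have hd := hM.hasDerivAt hl
  have hconv := hM.1.2.1
  have hMl := hM.1.2.2.2.1 l hl.le
  have h1 : slope M 0 l ≤ deriv M l :=
    hconv.slope_le_deriv (x := 0) (y := l) (self_mem_Ici) hl.le hl hd.differentiableAt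
  have h3 : deriv M l ≤ slope M l (2 * l) :=
    hconv.deriv_le_slope (x := l) (y := 2 * l) hl.le (by simp; positivity) (by linarith)
      hd.differentiableAt
  have h0 : 0 ≤ deriv M l := by
    refine le_trans ?_ h1
    rw [slope_def_field, hM.1.2.2.1]
    simp only [sub_zero]
    positivity
  rw [slope_def_field, le_div_iff₀ (by linarith)] at h3
  rw [abs_of_nonneg h0]
  have := h2 l hl
  nlinarith

/-- The weight `g(λ) = M(λ)/λ²`, as a function of `t = λ²`. -/
def wt (M : ℝ → ℝ) (t : ℝ) : ℝ := M (√t) / t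

lemma wt_nonneg {M : ℝ → ℝ} (hM : IsNFunction M) {t : ℝ} (ht : 0 ≤ t) : 0 ≤ wt M t :=
  div_nonneg (hM.2.2.2.1 _ (Real.sqrt_nonneg _)) ht

lemma wt_contDiffAt {M : ℝ → ℝ} (hM : CondM M) {t : ℝ} (ht : 0 < t) :
    ContDiffAt ℝ 1 (wt M) t := by
  have hs : 0 < √t := Real.sqrt_pos.2 ht
  have h1 : ContDiffAt ℝ 1 M (√t) := hM.2.1.contDiffAt (Ioi_mem_nhds hs)
  exact (h1.comp t (Real.contDiffAt_sqrt ht.ne')).div contDiffAt_id ht.ne'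

lemma wt_deriv_bound {M : ℝ → ℝ} (hM : CondM M) {c : ℝ}
    (hc : ∀ l > 0, |deriv M l| * l ≤ c * M l) {t : ℝ} (ht : 0 < t) :
    |deriv (wt M) t| * t ≤ (c / 2 + 1) * wt M t := by
  have hs : 0 < √t := Real.sqrt_pos.2 ht
  have hst : √t * √t = t := Real.mul_self_sqrt ht.le
  have h1 : HasDerivAt (wt M) _ t :=
    ((hM.hasDerivAt hs).comp t (Real.hasDerivAt_sqrt ht.ne')).div (hasDerivAt_id t) ht.ne'
  rw [h1.deriv]
  have hMs := hM.1.2.2.2.1 _ hs.le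
  have e : (deriv M √t * (1 / (2 * √t)) * t - (M ∘ Real.sqrt) t * 1) / t ^ 2
      = (deriv M √t * √t / 2 - M √t) / t / t := by
    simp only [Function.comp]
    have : deriv M √t * (1 / (2 * √t)) * t = deriv M √t * √t / 2 := by
      nth_rewrite 3 [← hst]; field_simp
    rw [this]; field_simp
  rw [e, wt, abs_div, abs_of_pos ht, div_mul_cancel₀ _ ht.ne', abs_div, abs_of_pos ht,
    ← mul_div_assoc]
  gcongr
  have := hc _ hs
  calc |deriv M √t * √t / 2 - M √t| ≤ |deriv M √t * √t / 2| + |M √t| := abs_sub _ _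
    _ = |deriv M √t| * √t / 2 + M √t := by
        rw [abs_div, abs_mul, abs_of_pos hs, abs_of_nonneg hMs]; norm_num
    _ ≤ _ := by linarith

lemma wt_mul_self {M : ℝ → ℝ} {t : ℝ} (ht : 0 < t) : wt M t = M (√t) / (√t) ^ 2 := by
  rw [wt, Real.sq_sqrt ht.le]

/-- The rescaled Young inequality: only the product `vw` matters, so `v` and `w` can be scaled
by `sτ` and `1/τ`. -/
lemma young_scaled {M P Q : ℝ → ℝ} (hM : IsNFunction M) (hY : CondY M P Q) {s τ : ℝ} (hs : 0 < s)
    (hτ : 0 < τ) {t v w : ℝ} (ht : 0 < t) (hv : 0 ≤ v) (hw : 0 ≤ w) :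
    wt M t * v * w ≤ s⁻¹ * (M (√t) + P (s * τ * v) + Q (w / τ)) := by
  obtain ⟨-, -, hP0, hQ0, -, -, -, -, hy⟩ := hY
  have hMt := hM.2.2.2.1 _ (Real.sqrt_nonneg t)
  have h1 := hP0 (s * τ * v) (by positivity)
  have h2 := hQ0 (w / τ) (by positivity)
  have hR : 0 ≤ s⁻¹ * (M (√t) + P (s * τ * v) + Q (w / τ)) := by positivity
  rcases hv.eq_or_lt with rfl | hv0
  · simpa using hR
  rcases hw.eq_or_lt with rfl | hw0
  · simpa using hR
  have h := hy (√t) (Real.sqrt_pos.2 ht) (s * τ * v) (by positivity) (w / τ) (by positivity)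
  rw [← wt_mul_self ht] at h
  have e : wt M t * (s * τ * v) * (w / τ) = s * (wt M t * v * w) := by field_simp
  rw [e] at h
  rw [inv_mul_eq_div, le_div_iff₀ hs]
  linarith

/-! ### The regularised vector field -/

/-- The regularised squared gradient length `|∇u|² + ε`. -/
def tReg {n : ℕ} (u : E n → ℝ) (ε : ℝ) (x : E n) : ℝ := ∑ j, pd u j x ^ 2 + ε

lemma tReg_eq {n : ℕ} (u : E n → ℝ) (ε : ℝ) (x : E n) : tReg u ε x = ‖gradient u x‖ ^ 2 + ε := by
  rw [tReg, norm_gradient_sq]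

lemma tReg_pos {n : ℕ} (u : E n → ℝ) {ε : ℝ} (hε : 0 < ε) (x : E n) : 0 < tReg u ε x := by
  rw [tReg_eq]; positivity

lemma contDiff_tReg {n : ℕ} {u : E n → ℝ} (hu : ContDiff ℝ (⊤ : ℕ∞) u) (ε : ℝ) :
    ContDiff ℝ 1 (tReg u ε) := by
  unfold tReg
  refine (ContDiff.sum fun j _ => ((contDiff_pd hu j).of_le (by norm_cast)).pow 2).add
    contDiff_const

lemma pd_tReg {n : ℕ} {u : E n → ℝ} (hu : ContDiff ℝ (⊤ : ℕ∞) u) (ε : ℝ) (i : Fin n) (x : E n) :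
    pd (tReg u ε) i x = ∑ j, 2 * pd u j x * pd (pd u j) i x := by
  have h : ∀ j, HasFDerivAt (pd u j) (fderiv ℝ (pd u j) x) x := fun j =>
    ((contDiff_pd hu j).differentiable (by simp) x).hasFDerivAt
  have h1 : HasFDerivAt (tReg u ε) _ x :=
    (HasFDerivAt.fun_sum (u := Finset.univ) fun j _ => (h j).pow 2).add_const ε
  rw [pd, h1.fderiv]
  simp [pd]

/-- The components of the regularised field `g(√(|∇u|²+ε)) ∇u`. -/
def fld {n : ℕ} (M : ℝ → ℝ) (u : E n → ℝ) (ε : ℝ) (i : Fin n) (x : E n) : ℝ :=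
  wt M (tReg u ε x) * pd u i x

lemma contDiff_wt_tReg {n : ℕ} {M : ℝ → ℝ} (hM : CondM M) {u : E n → ℝ}
    (hu : ContDiff ℝ (⊤ : ℕ∞) u) {ε : ℝ} (hε : 0 < ε) :
    ContDiff ℝ 1 (fun x => wt M (tReg u ε x)) := by
  rw [contDiff_iff_contDiffAt]
  exact fun x => (wt_contDiffAt hM (tReg_pos u hε x)).comp x (contDiff_tReg hu ε).contDiffAt

lemma contDiff_fld {n : ℕ} {M : ℝ → ℝ} (hM : CondM M) {u : E n → ℝ}
    (hu : ContDiff ℝ (⊤ : ℕ∞) u) {ε : ℝ} (hε : 0 < ε) (i : Fin n) :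
    ContDiff ℝ 1 (fld M u ε i) :=
  (contDiff_wt_tReg hM hu hε).mul ((contDiff_pd hu i).of_le (by norm_cast))

lemma pd_fld {n : ℕ} {M : ℝ → ℝ} (hM : CondM M) {u : E n → ℝ}
    (hu : ContDiff ℝ (⊤ : ℕ∞) u) {ε : ℝ} (hε : 0 < ε) (i : Fin n) (x : E n) :
    pd (fld M u ε i) i x =
      pd u i x * (deriv (wt M) (tReg u ε x) * ∑ j, 2 * pd u j x * pd (pd u j) i x)
        + wt M (tReg u ε x) * pd (pd u i) i x := by
  have h1 : HasDerivAt (wt M) _ (tReg u ε x) :=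
    ((wt_contDiffAt hM (tReg_pos u hε x)).differentiableAt (by simp)).hasDerivAt
  have h2 : HasFDerivAt (tReg u ε) _ x :=
    ((contDiff_tReg hu ε).differentiable (by simp) x).hasFDerivAt
  have h3 : HasFDerivAt (pd u i) _ x :=
    ((contDiff_pd hu i).differentiable (by simp) x).hasFDerivAt
  have h4 : HasFDerivAt (fld M u ε i) _ x := (h1.comp_hasFDerivAt x h2).mul h3
  rw [← pd_tReg hu ε]
  rw [pd, h4.fderiv]
  simp [pd]
  ring

/-- Each term of the divergence of the regularised field is bounded by `g(√(|∇u|²+ε)) |∇²u|`, up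
to a constant. -/
lemma abs_pd_fld_le {n : ℕ} {M : ℝ → ℝ} (hM : CondM M) {c : ℝ}
    (hc : ∀ l > 0, |deriv M l| * l ≤ c * M l) {u : E n → ℝ}
    (hu : ContDiff ℝ (⊤ : ℕ∞) u) {ε : ℝ} (hε : 0 < ε) (i : Fin n) (x : E n) :
    |pd (fld M u ε i) i x| ≤ (n * (c + 2) + 1) * (wt M (tReg u ε x) * hessNormHS u x) := by
  have ht := tReg_pos u hε x
  set t := tReg u ε x with htd
  have hH := hess_nonneg u x
  set H := hessNormHS u x
  have hw := wt_nonneg hM.1 ht.le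
  have hg : ‖gradient u x‖ ^ 2 ≤ t := by rw [htd, tReg_eq]; linarith
  rw [pd_fld hM hu hε]
  have h1 : |pd u i x * ∑ j, 2 * pd u j x * pd (pd u j) i x| ≤ 2 * n * H * t := by
    rw [Finset.mul_sum]
    refine (Finset.abs_sum_le_sum_abs _ _).trans ?_
    calc ∑ j, |pd u i x * (2 * pd u j x * pd (pd u j) i x)| ≤ ∑ j : Fin n, 2 * H * t := by
          refine Finset.sum_le_sum fun j _ => ?_
          have e : |pd u i x * (2 * pd u j x * pd (pd u j) i x)|
              = 2 * |pd (pd u j) i x| * (|pd u i x| * |pd u j x|) := by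
            simp only [abs_mul]; norm_num; ring
          rw [e]
          have := abs_hess_entry_le hu i j x
          have h2 : |pd u i x| * |pd u j x| ≤ t := by
            refine le_trans ?_ hg
            rw [sq]
            exact mul_le_mul (abs_pd_le u x i) (abs_pd_le u x j) (abs_nonneg _) (norm_nonneg _)
          gcongr
      _ = 2 * n * H * t := by simp; ring
  have h2 := wt_deriv_bound hM hc ht
  have h3 := abs_hess_entry_le hu i i x
  calc |pd u i x * (deriv (wt M) t * ∑ j, 2 * pd u j x * pd (pd u j) i x)
        + wt M t * pd (pd u i) i x|
      ≤ |deriv (wt M) t| * |pd u i x * ∑ j, 2 * pd u j x * pd (pd u j) i x|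
        + wt M t * |pd (pd u i) i x| := by
        refine (abs_add_le _ _).trans (le_of_eq ?_)
        simp only [abs_mul, abs_of_nonneg hw]; ring
    _ ≤ |deriv (wt M) t| * (2 * n * H * t) + wt M t * H := by gcongr
    _ = 2 * n * H * (|deriv (wt M) t| * t) + wt M t * H := by ring
    _ ≤ 2 * n * H * ((c / 2 + 1) * wt M t) + wt M t * H := by gcongr
    _ = _ := by ring

/-! ### The regularised integral inequality -/

lemma integrable_cont {n : ℕ} {Ω : Set (E n)} (hΩ : IsOpen Ω) {φ : E n → ℝ}
    (hφ : LocLipschitzOn Ω φ) {S : Set (E n)} (hS : IsCompact S) (hSΩ : S ⊆ Ω) {f : E n → ℝ}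
    (hf : Continuous f) : Integrable f ((measOf Ω φ).restrict S) := by
  have : IsFiniteMeasure ((measOf Ω φ).restrict S) :=
    ⟨by simpa using measOf_compact_lt_top hΩ hφ hS hSΩ⟩
  obtain ⟨C, hC⟩ := hS.exists_bound_of_continuousOn hf.continuousOn
  exact Integrable.of_bound hf.aestronglyMeasurable C
    ((ae_restrict_iff' hS.measurableSet).2 (Eventually.of_forall hC))

lemma ae_grad {n : ℕ} {Ω : Set (E n)} {φ : E n → ℝ} {φ' : E n → E n}
    (hφ' : ∀ᵐ x ∂(volume.restrict Ω), HasGradientAt φ (φ' x) x) (S : Set (E n)) :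
    ∀ᵐ x ∂((measOf Ω φ).restrict S), HasGradientAt φ (φ' x) x :=
  ae_restrict_of_ae ((measOf_ac Ω φ).ae_le hφ')

lemma aesm_grad {n : ℕ} {Ω : Set (E n)} {φ : E n → ℝ} {φ' : E n → E n}
    (hφ' : ∀ᵐ x ∂(volume.restrict Ω), HasGradientAt φ (φ' x) x) (S : Set (E n)) :
    AEStronglyMeasurable φ' ((measOf Ω φ).restrict S) := by
  have h1 : Measurable (gradient φ) := by
    unfold gradient
    exact (LinearIsometryEquiv.continuous _).measurable.comp (measurable_fderiv ℝ φ)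
  refine ⟨gradient φ, h1.stronglyMeasurable, ?_⟩
  filter_upwards [ae_grad hφ' S] with x hx using hx.gradient.symm

/-- `x ↦ G(x, ∇φ(x))` is `μ`-integrable on compact subsets of `Ω` for continuous `G`, because
`∇φ` is bounded there. -/
lemma integrable_grad {n : ℕ} {Ω : Set (E n)} (hΩ : IsOpen Ω) {φ : E n → ℝ}
    (hφ : LocLipschitzOn Ω φ) {φ' : E n → E n}
    (hφ' : ∀ᵐ x ∂(volume.restrict Ω), HasGradientAt φ (φ' x) x)
    {S : Set (E n)} (hS : IsCompact S) (hSΩ : S ⊆ Ω) {G : E n × E n → ℝ}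
    (hG : Continuous G) : Integrable (fun x => G (x, φ' x)) ((measOf Ω φ).restrict S) := by
  have : IsFiniteMeasure ((measOf Ω φ).restrict S) :=
    ⟨by simpa using measOf_compact_lt_top hΩ hφ hS hSΩ⟩
  obtain ⟨ρ, D, C, -, -, hg⟩ := exists_density hΩ hφ hS hSΩ
  obtain ⟨C', hC'⟩ := (hS.prod (isCompact_closedBall (0 : E n) C)).exists_bound_of_continuousOn
    hG.continuousOn
  refine Integrable.of_bound (hG.comp_aestronglyMeasurable
    (continuous_id.aestronglyMeasurable.prodMk (aesm_grad hφ' S))) C' ?_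
  filter_upwards [ae_grad hφ' S, ae_restrict_mem hS.measurableSet] with x hx hxS
  exact hC' _ ⟨hxS, by simpa using (hg x hxS _ hx).1⟩

/-- The identity `∫ g|∇u|² dμ = ∫ (u g ⟨∇u,∇φ⟩ - u div(g∇u)) dμ` for the regularised weight,
followed by the pointwise bound on the divergence. -/
lemma basic_ineq {n : ℕ} {Ω : Set (E n)} (hΩ : IsOpen Ω) {M : ℝ → ℝ} (hM : CondM M) {c : ℝ}
    (hc : ∀ l > 0, |deriv M l| * l ≤ c * M l) {φ : E n → ℝ}
    (hφ : LocLipschitzOn Ω φ) {φ' : E n → E n}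
    (hφ' : ∀ᵐ x ∂(volume.restrict Ω), HasGradientAt φ (φ' x) x)
    {u : E n → ℝ} (hu : TestFun Ω u) {ε : ℝ} (hε : 0 < ε) :
    ∫ x in tsupport u, wt M (tReg u ε x) * ‖gradient u x‖ ^ 2 ∂(measOf Ω φ) ≤
      ∫ x in tsupport u,
        (wt M (tReg u ε x) * (n * (n * (c + 2) + 1) * hessNormHS u x) * |u x|
          + wt M (tReg u ε x) * (‖φ' x‖ * ‖gradient u x‖) * |u x|) ∂(measOf Ω φ) := by
  obtain ⟨hs, hcs, hsΩ⟩ := hu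
  have hcs' : IsCompact (tsupport u) := hcs
  set ν := (measOf Ω φ).restrict (tsupport u) with hν
  have hu1 : ContDiff ℝ 1 u := hs.of_le (by norm_cast)
  have hFd : ∀ i, ContDiff ℝ 1 (fun x => u x * fld M u ε i x) := fun i =>
    hu1.mul (contDiff_fld hM hs hε i)
  have hFs : ∀ i, tsupport (fun x => u x * fld M u ε i x) ⊆ tsupport u := fun i =>
    tsupport_mul_subset_left
  have hFc : ∀ i, HasCompactSupport (fun x => u x * fld M u ε i x) := fun i => hcs.mul_right
  -- integration by parts for each component, over the support
  have h1 : ∀ i, ∫ x, pd (fun x => u x * fld M u ε i x) i x ∂ν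
      = ∫ x, u x * fld M u ε i x * φ' x i ∂ν := fun i => by
    have h := ibp hΩ hφ hφ' (hFd i) (hFc i) ((hFs i).trans hsΩ) i
    have a := setIntegral_eq_integral_of_forall_compl_eq_zero (s := tsupport u) (μ := measOf Ω φ)
      (f := pd (fun x => u x * fld M u ε i x) i) (fun x hx => pd_eq_zero (fun h => hx (hFs i h)) i)
    have b := setIntegral_eq_integral_of_forall_compl_eq_zero (s := tsupport u) (μ := measOf Ω φ)
      (f := fun x => u x * fld M u ε i x * φ' x i)
      (fun x hx => by rw [image_eq_zero_of_notMem_tsupport hx]; ring)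
    exact a.trans (h.trans b.symm)
  have hpd : ∀ i x, pd (fun x => u x * fld M u ε i x) i x
      = pd u i x * fld M u ε i x + u x * pd (fld M u ε i) i x := fun i x => by
    have a := (hu1.differentiable (by simp) x).hasFDerivAt
    have b := ((contDiff_fld hM hs hε i).differentiable (by simp) x).hasFDerivAt
    have h : HasFDerivAt (fun x => u x * fld M u ε i x) _ x := a.mul b
    rw [pd, h.fderiv]
    simp [pd]
    ring
  have cw : Continuous fun x => wt M (tReg u ε x) := (contDiff_wt_tReg hM hs hε).continuous
  have cf : ∀ i, Continuous (fld M u ε i) := fun i => (contDiff_fld hM hs hε i).continuous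
  have cg : Continuous (gradient u) := continuous_gradient hs
  have ch : Continuous (hessNormHS u) := continuous_hess hs
  have cu : Continuous u := hs.continuous
  have cp : ∀ i, Continuous (pd u i) := fun i => (contDiff_pd hs i).continuous
  have cdf : ∀ i, Continuous (pd (fld M u ε i) i) := fun i => by
    unfold pd
    exact ((contDiff_fld hM hs hε i).continuous_fderiv (by simp)).clm_apply continuous_const
  have i1 : ∀ i, Integrable (fun x => pd u i x * fld M u ε i x) ν := fun i =>
    integrable_cont hΩ hφ hcs' hsΩ ((cp i).mul (cf i))
  have i2 : ∀ i, Integrable (fun x => u x * pd (fld M u ε i) i x) ν := fun i =>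
    integrable_cont hΩ hφ hcs' hsΩ (cu.mul (cdf i))
  have i3 : ∀ i, Integrable (fun x => u x * fld M u ε i x * φ' x i) ν := fun i =>
    integrable_grad hΩ hφ hφ' hcs' hsΩ
      (G := fun p => u p.1 * fld M u ε i p.1 * p.2 i) (by have := cf i; fun_prop)
  have i4 : ∀ i, Integrable
      (fun x => u x * fld M u ε i x * φ' x i - u x * pd (fld M u ε i) i x) ν := fun i =>
    (i3 i).sub (i2 i)
  have h2 : ∀ i, ∫ x, pd u i x * fld M u ε i x ∂ν
      = ∫ x, (u x * fld M u ε i x * φ' x i - u x * pd (fld M u ε i) i x) ∂ν := fun i => by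
    have := h1 i
    simp_rw [hpd] at this
    rw [integral_add (i1 i) (i2 i)] at this
    rw [integral_sub (i3 i) (i2 i)]
    linarith
  have h3 : ∀ x, wt M (tReg u ε x) * ‖gradient u x‖ ^ 2 = ∑ i, pd u i x * fld M u ε i x :=
    fun x => by
      rw [norm_gradient_sq, Finset.mul_sum]
      exact Finset.sum_congr rfl fun i _ => by rw [fld]; ring
  simp_rw [h3]
  rw [integral_finsetSum _ (fun i _ => i1 i), Finset.sum_congr rfl (fun i _ => h2 i),
    ← integral_finsetSum _ (fun i _ => i4 i)]
  refine integral_mono (integrable_finsetSum _ (fun i _ => i4 i)) ?_ fun x => ?_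
  · exact integrable_grad hΩ hφ hφ' hcs' hsΩ
      (G := fun p => wt M (tReg u ε p.1) * (n * (n * (c + 2) + 1) * hessNormHS u p.1) * |u p.1|
          + wt M (tReg u ε p.1) * (‖p.2‖ * ‖gradient u p.1‖) * |u p.1|)
        ((((cw.comp continuous_fst).mul (by fun_prop)).mul (by fun_prop)).add
          (((cw.comp continuous_fst).mul (by fun_prop)).mul (by fun_prop)))
  · have hw := wt_nonneg hM.1 (tReg_pos u hε x).le
    simp only [Finset.sum_sub_distrib]
    have e1 : ∑ i, u x * fld M u ε i x * φ' x i
        = u x * wt M (tReg u ε x) * inner ℝ (φ' x) (gradient u x) := by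
      rw [PiLp.inner_apply, Finset.mul_sum]
      refine Finset.sum_congr rfl fun i _ => ?_
      rw [gradient_coord, fld]; simp; ring
    have e2 : |∑ i, u x * pd (fld M u ε i) i x|
        ≤ |u x| * (n * ((n * (c + 2) + 1) * (wt M (tReg u ε x) * hessNormHS u x))) := by
      rw [← Finset.mul_sum, abs_mul]
      gcongr
      refine (Finset.abs_sum_le_sum_abs _ _).trans ?_
      refine (Finset.sum_le_sum fun i _ => abs_pd_fld_le hM hc hs hε i x).trans (le_of_eq ?_)
      simp
    have e3 : u x * wt M (tReg u ε x) * inner ℝ (φ' x) (gradient u x)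
        ≤ |u x| * wt M (tReg u ε x) * (‖φ' x‖ * ‖gradient u x‖) := by
      refine (le_abs_self _).trans ?_
      rw [abs_mul, abs_mul, abs_of_nonneg hw]
      gcongr
      exact abs_real_inner_le_norm _ _
    rw [e1]
    have := neg_abs_le (∑ i, u x * pd (fld M u ε i) i x)
    calc _ ≤ |u x| * wt M (tReg u ε x) * (‖φ' x‖ * ‖gradient u x‖)
          + |u x| * (n * ((n * (c + 2) + 1) * (wt M (tReg u ε x) * hessNormHS u x))) := by linarith
      _ = _ := by ring

/-- Removal of the regularisation: by dominated convergence, the integrals of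
`wt M (|∇u|² + ε) |∇u|²` and of `M (√(|∇u|² + ε))` both tend to that of `M |∇u|` as `ε → 0`. -/
lemma limit_reg {n : ℕ} {Ω : Set (E n)} (hΩ : IsOpen Ω) {M : ℝ → ℝ} (hM : IsNFunction M)
    (hM1 : CondM M) {φ : E n → ℝ} (hφ : LocLipschitzOn Ω φ) {u : E n → ℝ} (hu : TestFun Ω u) {R : ℝ}
    (h : ∀ ε > 0, ∫ x in tsupport u, wt M (tReg u ε x) * ‖gradient u x‖ ^ 2 ∂(measOf Ω φ) ≤
      (1 / 2) * ∫ x in tsupport u, M (√(tReg u ε x)) ∂(measOf Ω φ) + R) :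
    ∫ x in tsupport u, M ‖gradient u x‖ ∂(measOf Ω φ) ≤
      (1 / 2) * ∫ x in tsupport u, M ‖gradient u x‖ ∂(measOf Ω φ) + R := by
  obtain ⟨hs, hcs, hsΩ⟩ := hu
  set ν := (measOf Ω φ).restrict (tsupport u) with hν
  have ct : ∀ ε, Continuous (tReg u ε) := fun ε => (contDiff_tReg hs ε).continuous
  have cM : ∀ ε, Continuous fun x => M (√(tReg u ε x)) := fun ε =>
    hM.continuous_comp (ct ε).sqrt (fun x => Real.sqrt_nonneg _)
  have hbd : ∀ (k : ℕ) x, M (√(tReg u (1 / ((k:ℝ) + 1)) x)) ≤ M (√(tReg u 1 x)) := fun k x => by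
    refine hM.mono (Real.sqrt_nonneg _) (Real.sqrt_le_sqrt ?_)
    rw [tReg_eq, tReg_eq]
    have : 1 / ((k:ℝ) + 1) ≤ 1 := by rw [div_le_one (by positivity)]; simp
    linarith
  have hint : Integrable (fun x => M (√(tReg u 1 x))) ν :=
    integrable_cont hΩ hφ hcs hsΩ (cM 1)
  have ht : ∀ x, Tendsto (fun k : ℕ => tReg u (1 / ((k:ℝ) + 1)) x) atTop
      (nhds (‖gradient u x‖ ^ 2)) := fun x => by
    simp_rw [tReg_eq]
    simpa using (tendsto_const_nhds (x := ‖gradient u x‖ ^ 2)).add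
      (tendsto_one_div_add_atTop_nhds_zero_nat (𝕜 := ℝ))
  have hMt : ∀ x, Tendsto (fun k : ℕ => M (√(tReg u (1 / ((k:ℝ) + 1)) x))) atTop
      (nhds (M ‖gradient u x‖)) := fun x => by
    have c : Continuous fun y => M (√y) :=
      hM.continuous_comp Real.continuous_sqrt (fun x => Real.sqrt_nonneg _)
    have := (c.tendsto (‖gradient u x‖ ^ 2)).comp (ht x)
    rwa [Real.sqrt_sq (norm_nonneg _)] at this
  have l2 : Tendsto (fun k : ℕ => ∫ x, M (√(tReg u (1 / ((k:ℝ) + 1)) x)) ∂ν) atTop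
      (nhds (∫ x, M ‖gradient u x‖ ∂ν)) := by
    refine tendsto_integral_of_dominated_convergence _
      (fun k => (cM _).aestronglyMeasurable) hint (fun k => Eventually.of_forall fun x => ?_)
      (Eventually.of_forall hMt)
    rw [Real.norm_of_nonneg (hM.2.2.2.1 _ (Real.sqrt_nonneg _))]
    exact hbd k x
  have l1 : Tendsto (fun k : ℕ => ∫ x, wt M (tReg u (1 / ((k:ℝ) + 1)) x) * ‖gradient u x‖ ^ 2 ∂ν)
      atTop (nhds (∫ x, M ‖gradient u x‖ ∂ν)) := by
    have cg : Continuous (gradient u) := continuous_gradient hs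
    refine tendsto_integral_of_dominated_convergence _
      (fun k => ?_) hint (fun k => Eventually.of_forall fun x => ?_)
      (Eventually.of_forall fun x => ?_)
    · exact ((contDiff_wt_tReg hM1 hs (by positivity)).continuous.mul
        (cg.norm.pow 2)).aestronglyMeasurable
    · have hp : 0 < tReg u (1 / ((k:ℝ) + 1)) x := tReg_pos u (by positivity) x
      have hw := wt_nonneg hM hp.le
      have hMp := hM.2.2.2.1 _ (Real.sqrt_nonneg (tReg u (1 / ((k:ℝ) + 1)) x))
      rw [Real.norm_of_nonneg (by positivity)]
      refine le_trans ?_ (hbd k x)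
      have : ‖gradient u x‖ ^ 2 ≤ tReg u (1 / ((k:ℝ) + 1)) x := by
        rw [tReg_eq]
        have : 0 < 1 / ((k:ℝ) + 1) := by positivity
        linarith
      rw [wt, div_mul_eq_mul_div, div_le_iff₀ hp]
      gcongr
    · by_cases hz : gradient u x = 0
      · simp [hz, hM.2.2.1]
      · have hz' : ‖gradient u x‖ ^ 2 ≠ 0 := by simpa using hz
        have := ((hMt x).div (ht x) hz').mul_const (‖gradient u x‖ ^ 2)
        rw [div_mul_cancel₀ _ hz'] at this
        exact this
  exact le_of_tendsto_of_tendsto' l1 ((l2.const_mul (1 / 2)).add_const R)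
    (fun k => h _ (by positivity))

/-! ### The modular inequality -/

/-- The modular Gagliardo–Nirenberg inequality, with a free scaling parameter `τ`. The integrals
are restricted to the compact `tsupport u` in the proof, where every integrand is integrable; in particular
`∫ M |∇u|` is finite, so that half of it can be subtracted from both sides. -/
lemma modular {n : ℕ} (Ω : Set (E n)) (hΩ : IsOpen Ω)
    (M P Q : ℝ → ℝ) (hM : CondM M) (hY : CondY M P Q)
    (hP : IsNFunction P) (hQ : IsNFunction Q)
    (φ : E n → ℝ) (hφ : LocLipschitzOn Ω φ) (φ' : E n → E n)
    (hφ' : ∀ᵐ x ∂(volume.restrict Ω), HasGradientAt φ (φ' x) x)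
    (K A : ℝ) (hK : 0 < K) (hA : 0 < A)
    (hH : ∀ u : E n → ℝ, TestFun Ω u →
      ∫ x, P (‖φ' x‖ * |u x|) ∂(measOf Ω φ) ≤
        K * ∫ x, P (A * ‖gradient u x‖) ∂(measOf Ω φ)) :
    ∃ L ≥ (1:ℝ), ∃ B > (0:ℝ), ∀ u : E n → ℝ, TestFun Ω u → ∀ τ > (0:ℝ),
      ∫ x, M ‖gradient u x‖ ∂(measOf Ω φ) ≤
        L * (∫ x, P (B * τ * hessNormHS u x) ∂(measOf Ω φ)
          + ∫ x, Q (|u x| / τ) ∂(measOf Ω φ)) := by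
  obtain ⟨c, hc0, hc⟩ := hM.deriv_bound
  set C' : ℝ := n * (n * (c + 2) + 1) with hC'
  have hC'0 : 0 ≤ C' := by positivity
  refine ⟨1 + n * K, by nlinarith [Nat.cast_nonneg (α := ℝ) n],
    4 * C' + 4 * n * A + 1, by positivity, fun u hu τ hτ => ?_⟩
  set B := 4 * C' + 4 * n * A + 1 with hB
  have hs := hu.1
  have hcs' : IsCompact (tsupport u) := hu.2.1
  have hsΩ := hu.2.2
  have cg : Continuous (gradient u) := continuous_gradient hs
  have ch : Continuous (hessNormHS u) := continuous_hess hs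
  have cu : Continuous u := hs.continuous
  have cp : ∀ i, Continuous (pd u i) := fun i => (contDiff_pd hs i).continuous
  have cP : Continuous fun y => P |y| := hP.continuous_comp continuous_abs abs_nonneg
  have hH0 := hess_nonneg u
  have eM := setIntegral_eq_integral_of_forall_compl_eq_zero (s := tsupport u) (μ := measOf Ω φ)
    (f := fun x => M ‖gradient u x‖) (fun x hx => by
      rw [gradient_eq_zero hx, norm_zero, hM.1.2.2.1])
  have eP : ∀ b, ∫ x in tsupport u, P (b * hessNormHS u x) ∂(measOf Ω φ)
      = ∫ x, P (b * hessNormHS u x) ∂(measOf Ω φ) := fun b =>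
    setIntegral_eq_integral_of_forall_compl_eq_zero (fun x hx => by
      rw [hess_eq_zero hs hx, mul_zero, hP.2.2.1])
  have eQ := setIntegral_eq_integral_of_forall_compl_eq_zero (s := tsupport u) (μ := measOf Ω φ)
    (f := fun x => Q (|u x| / τ)) (fun x hx => by
      rw [image_eq_zero_of_notMem_tsupport hx, abs_zero, zero_div, hQ.2.2.1])
  rw [← eM, ← eP, ← eQ]
  set ν := (measOf Ω φ).restrict (tsupport u) with hν
  have iP : ∀ b, 0 ≤ b → Integrable (fun x => P (b * hessNormHS u x)) ν := fun b hb =>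
    integrable_cont hΩ hφ hcs' hsΩ
      (hP.continuous_comp (by fun_prop) (fun x => mul_nonneg hb (hH0 x)))
  have iQ : Integrable (fun x => Q (|u x| / τ)) ν :=
    integrable_cont hΩ hφ hcs' hsΩ
      (hQ.continuous_comp (by fun_prop) (fun x => by positivity))
  have iG : Integrable (fun x => P (4 * τ * (‖φ' x‖ * ‖gradient u x‖))) ν := by
    have := integrable_grad hΩ hφ hφ' hcs' hsΩ
      (G := fun p => P |4 * τ * (‖p.2‖ * ‖gradient u p.1‖)|) (cP.comp (by fun_prop))
    refine this.congr (Eventually.of_forall fun x => ?_)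
    simp only
    rw [abs_of_nonneg (by positivity)]
  have iGi : ∀ i, Integrable (fun x => P (‖φ' x‖ * |4 * τ * n * pd u i x|)) ν := fun i => by
    have := integrable_grad hΩ hφ hφ' hcs' hsΩ
      (G := fun p => P (abs (‖p.2‖ * abs (4 * τ * n * pd u i p.1))))
      (cP.comp (by have := cp i; fun_prop))
    refine this.congr (Eventually.of_forall fun x => ?_)
    simp only
    rw [abs_of_nonneg (by positivity)]
  have iM : ∀ ε, Integrable (fun x => M (√(tReg u ε x))) ν := fun ε =>
    integrable_cont hΩ hφ hcs' hsΩ (hM.1.continuous_comp (contDiff_tReg hs ε).continuous.sqrt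
      (fun x => Real.sqrt_nonneg _))
  -- monotonicity in the coefficient of the Hessian term
  have hmonoP : ∀ b, 0 ≤ b → b ≤ B * τ →
      ∫ x, P (b * hessNormHS u x) ∂ν ≤ ∫ x, P (B * τ * hessNormHS u x) ∂ν := fun b hb hbB =>
    integral_mono (iP b hb) (iP _ (hb.trans hbB)) fun x =>
      hP.mono (mul_nonneg hb (hH0 x)) (mul_le_mul_of_nonneg_right hbB (hH0 x))
  have hPn : 0 ≤ ∫ x, P (B * τ * hessNormHS u x) ∂ν :=
    integral_nonneg fun x => hP.2.2.2.1 _ (mul_nonneg (by positivity) (hH0 x))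
  have hQn : 0 ≤ ∫ x, Q (|u x| / τ) ∂ν :=
    integral_nonneg fun x => hQ.2.2.2.1 _ (by positivity)
  -- Hardy's inequality for each partial derivative
  have hardy : ∀ i, ∫ x, P (‖φ' x‖ * |4 * τ * n * pd u i x|) ∂ν ≤
      K * ∫ x, P (B * τ * hessNormHS u x) ∂ν := fun i => by
    have hz : ∀ x, x ∉ tsupport u → pd u i x = 0 := fun x hx => pd_eq_zero hx i
    have h1 := hH _ ((hu.pd i).const_mul (4 * τ * n))
    rw [← setIntegral_eq_integral_of_forall_compl_eq_zero (s := tsupport u) (fun x hx => by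
      rw [hz x hx, mul_zero, abs_zero, mul_zero, hP.2.2.1])] at h1
    refine h1.trans (mul_le_mul_of_nonneg_left ?_ hK.le)
    have hzz : ∀ x, x ∉ tsupport u → gradient (pd u i) x = 0 := fun x hx =>
      gradient_eq_zero (fun h => hx (tsupport_fderiv_apply_subset ℝ _ h))
    simp_rw [norm_gradient_const_mul ((contDiff_pd hs i).differentiable (by simp))]
    rw [← setIntegral_eq_integral_of_forall_compl_eq_zero (s := tsupport u) (fun x hx => by
      rw [hzz x hx, norm_zero, mul_zero, mul_zero, hP.2.2.1]), abs_of_nonneg (by positivity)]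
    have cgi : Continuous (gradient (pd u i)) := continuous_gradient (contDiff_pd hs i)
    refine integral_mono (integrable_cont hΩ hφ hcs' hsΩ (hP.continuous_comp (by fun_prop)
      (fun x => by positivity))) (iP _ (by positivity)) fun x => hP.mono (by positivity) ?_
    have h2 := norm_gradient_pd_le hs i x
    calc A * (4 * τ * n * ‖gradient (pd u i) x‖) ≤ A * (4 * τ * n * hessNormHS u x) := by gcongr
      _ = (4 * n * A) * τ * hessNormHS u x := by ring
      _ ≤ B * τ * hessNormHS u x := by
        have := hH0 x
        gcongr
        rw [hB]; linarith
  have hI2 : ∫ x, P (4 * τ * (‖φ' x‖ * ‖gradient u x‖)) ∂ν ≤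
      n * K * ∫ x, P (B * τ * hessNormHS u x) ∂ν := by
    calc _ ≤ ∫ x, ∑ i, P (‖φ' x‖ * |4 * τ * n * pd u i x|) ∂ν := by
          refine integral_mono iG (integrable_finsetSum _ fun i _ => iGi i) fun x => ?_
          have hnn : ∀ i ∈ Finset.univ, 0 ≤ P (‖φ' x‖ * |4 * τ * n * pd u i x|) :=
            fun i _ => hP.2.2.2.1 _ (by positivity)
          by_cases hz : gradient u x = 0
          · simp only [hz, norm_zero, mul_zero, hP.2.2.1]
            exact Finset.sum_nonneg hnn
          · obtain ⟨i, hi⟩ := norm_gradient_le_max u x hz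
            refine le_trans (hP.mono (by positivity) ?_)
              (Finset.single_le_sum hnn (Finset.mem_univ i))
            rw [abs_mul, abs_of_nonneg (by positivity : 0 ≤ 4 * τ * n)]
            calc 4 * τ * (‖φ' x‖ * ‖gradient u x‖) ≤ 4 * τ * (‖φ' x‖ * (n * |pd u i x|)) := by
                  gcongr
              _ = _ := by ring
      _ = ∑ i, ∫ x, P (‖φ' x‖ * |4 * τ * n * pd u i x|) ∂ν :=
          integral_finsetSum _ fun i _ => iGi i
      _ ≤ ∑ i : Fin n, K * ∫ x, P (B * τ * hessNormHS u x) ∂ν := Finset.sum_le_sum fun i _ => hardy i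
      _ = _ := by simp; ring
  have hI1 : ∫ x, P (4 * τ * C' * hessNormHS u x) ∂ν ≤ ∫ x, P (B * τ * hessNormHS u x) ∂ν := by
    refine hmonoP _ (by positivity) ?_
    rw [hB]
    have : 0 ≤ (4 * n * A + 1) * τ := by positivity
    linarith
  have main := limit_reg hΩ hM.1 hM hφ hu
    (R := (1 / 4) * ∫ x, P (4 * τ * C' * hessNormHS u x) ∂ν
      + (1 / 4) * ∫ x, P (4 * τ * (‖φ' x‖ * ‖gradient u x‖)) ∂ν
      + (1 / 2) * ∫ x, Q (|u x| / τ) ∂ν) (fun ε hε => by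
    refine (basic_ineq hΩ hM hc hφ hφ' hu hε).trans ?_
    have j1 := (iM ε).const_mul (1 / 2)
    have j2 := (iP (4 * τ * C') (by positivity)).const_mul (1 / 4)
    have j3 := iG.const_mul (1 / 4)
    have j4 := iQ.const_mul (1 / 2)
    have j5 : Integrable (fun x => 1 / 4 * P (4 * τ * C' * hessNormHS u x)
        + 1 / 4 * P (4 * τ * (‖φ' x‖ * ‖gradient u x‖))) ν := j2.add j3
    have j6 : Integrable (fun x => 1 / 4 * P (4 * τ * C' * hessNormHS u x)
        + 1 / 4 * P (4 * τ * (‖φ' x‖ * ‖gradient u x‖)) + 1 / 2 * Q (|u x| / τ)) ν := j5.add j4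
    rw [← hν, ← integral_const_mul, ← integral_const_mul, ← integral_const_mul,
      ← integral_const_mul, ← integral_add j2 j3, ← integral_add j5 j4, ← integral_add j1 j6]
    have cw : Continuous fun x => wt M (tReg u ε x) := (contDiff_wt_tReg hM hs hε).continuous
    refine integral_mono (integrable_grad hΩ hφ hφ' hcs' hsΩ
      (G := fun p => wt M (tReg u ε p.1) * (n * (n * (c + 2) + 1) * hessNormHS u p.1) * |u p.1|
          + wt M (tReg u ε p.1) * (‖p.2‖ * ‖gradient u p.1‖) * |u p.1|)
        ((((cw.comp continuous_fst).mul (by fun_prop)).mul (by fun_prop)).add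
          (((cw.comp continuous_fst).mul (by fun_prop)).mul (by fun_prop))))
      (j1.add j6) fun x => ?_
    have hp := tReg_pos u hε x
    -- with `s = 4` the two Young inequalities cost `M / 4` each, leaving half of the left-hand
    -- side to be absorbed
    have y1 := young_scaled hM.1 hY (s := 4) (by norm_num) hτ hp
      (mul_nonneg hC'0 (hH0 x)) (abs_nonneg (u x))
    have y2 := young_scaled hM.1 hY (s := 4) (by norm_num) hτ hp
      (mul_nonneg (norm_nonneg (φ' x)) (norm_nonneg (gradient u x))) (abs_nonneg (u x))
    rw [← mul_assoc (4 * τ) C'] at y1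
    simp only
    rw [← hC']
    linarith)
  have hKn : 0 ≤ n * K := by positivity
  nlinarith [mul_nonneg hKn hPn, mul_nonneg hKn hQn]

/-! ### Luxemburg norms -/

/-- Dividing a function by `Λ ≥ 1` divides its modular by at least `Λ`, by convexity. -/
lemma modular_div {n : ℕ} {Ω : Set (E n)} (hΩ : IsOpen Ω) {φ : E n → ℝ}
    (hφ : LocLipschitzOn Ω φ) {S : Set (E n)} (hS : IsCompact S) (hSΩ : S ⊆ Ω)
    {R : ℝ → ℝ} (hR : IsNFunction R) {f : E n → ℝ} (hf : Continuous f)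
    (hf0 : ∀ x, x ∉ S → f x = 0) {Λ : ℝ} (hΛ : 1 ≤ Λ)
    (h : ∫ x, R |f x| ∂(measOf Ω φ) ≤ Λ) : ∫ x, R (|f x| / Λ) ∂(measOf Ω φ) ≤ 1 := by
  have hΛ0 : 0 < Λ := by linarith
  rw [← setIntegral_eq_integral_of_forall_compl_eq_zero (s := S) (fun x hx => by
    rw [hf0 x hx, abs_zero, hR.2.2.1])] at h
  rw [← setIntegral_eq_integral_of_forall_compl_eq_zero (s := S) (fun x hx => by
    rw [hf0 x hx, abs_zero, zero_div, hR.2.2.1])]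
  calc _ ≤ ∫ x in S, Λ⁻¹ * R |f x| ∂(measOf Ω φ) := by
        refine integral_mono
          (integrable_cont hΩ hφ hS hSΩ (hR.continuous_comp (by fun_prop) (fun x => by positivity)))
          ((integrable_cont hΩ hφ hS hSΩ
            (hR.continuous_comp (by fun_prop) (fun x => abs_nonneg _))).const_mul _) fun x => ?_
        simp only
        rw [div_eq_inv_mul]
        exact hR.mul_le (by positivity) (inv_le_one_of_one_le₀ hΛ) (abs_nonneg _)
    _ ≤ 1 := by
        rw [integral_const_mul, inv_mul_le_iff₀ hΛ0]; linarith

/-- The infimum defining the Luxemburg norm is over a nonempty set, so it is not the junk value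
`sInf ∅ = 0`. -/
lemma lux_nonempty {n : ℕ} {Ω : Set (E n)} (hΩ : IsOpen Ω) {φ : E n → ℝ}
    (hφ : LocLipschitzOn Ω φ) {S : Set (E n)} (hS : IsCompact S) (hSΩ : S ⊆ Ω)
    {R : ℝ → ℝ} (hR : IsNFunction R) {f : E n → ℝ} (hf : Continuous f)
    (hf0 : ∀ x, x ∉ S → f x = 0) :
    {K : ℝ | 0 < K ∧ ∫ x, R (|f x| / K) ∂(measOf Ω φ) ≤ 1}.Nonempty :=
  ⟨max 1 (∫ x, R |f x| ∂(measOf Ω φ)), lt_of_lt_of_le one_pos (le_max_left _ _),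
    modular_div hΩ hφ hS hSΩ hR hf hf0 (le_max_left _ _) (le_max_right _ _)⟩

lemma lux_bddBelow {α : Type*} [MeasurableSpace α] (R : ℝ → ℝ) (μ : Measure α) (f : α → ℝ) :
    BddBelow {K : ℝ | 0 < K ∧ ∫ x, R (|f x| / K) ∂μ ≤ 1} := ⟨0, fun _ h => h.1.le⟩

/-! ### The inequality for Luxemburg norms -/

/-- Theorem 3.1(2): the Hardy inequality (H) implies the Gagliardo–Nirenberg
inequality for Luxemburg norms. -/
theorem statement1 {n : ℕ} (Ω : Set (E n)) (hΩ : IsOpen Ω)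
    (M P Q : ℝ → ℝ) (hM : CondM M) (hY : CondY M P Q)
    (hP : IsNFunction P) (hQ : IsNFunction Q)
    (φ : E n → ℝ) (hφ : LocLipschitzOn Ω φ) (φ' : E n → E n)
    (hφ' : ∀ᵐ x ∂(volume.restrict Ω), HasGradientAt φ (φ' x) x)
    (K A : ℝ) (hK : 0 < K) (hA : 0 < A)
    (hH : ∀ u : E n → ℝ, TestFun Ω u →
      ∫ x, P (‖φ' x‖ * |u x|) ∂(measOf Ω φ) ≤
        K * ∫ x, P (A * ‖gradient u x‖) ∂(measOf Ω φ)) :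
    ∃ Ltilde > (0:ℝ), ∀ u : E n → ℝ, TestFun Ω u →
      luxNorm M (measOf Ω φ) (fun x => ‖gradient u x‖) ≤
        Ltilde * Real.sqrt (luxNorm P (measOf Ω φ) (hessNormHS u) *
          luxNorm Q (measOf Ω φ) u) := by
  obtain ⟨L, hL, B, hB, hmod⟩ := modular Ω hΩ M P Q hM hY hP hQ φ hφ φ' hφ' K A hK hA hH
  refine ⟨2 * L * √B, by positivity, fun u hu => ?_⟩
  have hs := hu.1
  have hcs' : IsCompact (tsupport u) := hu.2.1
  have hsΩ := hu.2.2
  have cg : Continuous (gradient u) := continuous_gradient hs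
  have hd := hs.differentiable (by simp)
  -- the estimate for admissible `a`, `b` in the two infima
  have key : ∀ a, (0 < a ∧ ∫ x, P (|hessNormHS u x| / a) ∂(measOf Ω φ) ≤ 1) →
      ∀ b, (0 < b ∧ ∫ x, Q (|u x| / b) ∂(measOf Ω φ) ≤ 1) →
      luxNorm M (measOf Ω φ) (fun x => ‖gradient u x‖) ≤ 2 * L * √B * √(a * b) := by
    rintro a ⟨ha, hPa⟩ b ⟨hb, hQb⟩
    set k := √B * √(a * b) with hk
    have hk0 : 0 < k := by positivity
    have hk2 : k * k = B * (a * b) := by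
      rw [hk, mul_mul_mul_comm, Real.mul_self_sqrt hB.le, Real.mul_self_sqrt (by positivity)]
    -- `τ` is chosen so that the two right-hand modulars of `u/k` are those of `∇²u/a` and `u/b`
    have h := hmod _ (hu.const_mul k⁻¹) (k / (B * a)) (by positivity)
    have e1 : ∀ x, B * (k / (B * a)) * hessNormHS (fun x => k⁻¹ * u x) x
        = |hessNormHS u x| / a := fun x => by
      rw [hess_const_mul hs, abs_of_pos (by positivity : 0 < k⁻¹), abs_of_nonneg (hess_nonneg u x)]
      field_simp
    have e2 : ∀ x, |k⁻¹ * u x| / (k / (B * a)) = |u x| / b := fun x => by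
      rw [abs_mul, abs_of_pos (by positivity : 0 < k⁻¹)]
      have : k⁻¹ / (k / (B * a)) = b⁻¹ := by
        field_simp
        rw [sq, hk2]; ring
      rw [mul_div_right_comm, this]; ring
    have e3 : ∀ x, ‖gradient (fun x => k⁻¹ * u x) x‖ = |(‖gradient u x‖ / k)| := fun x => by
      rw [norm_gradient_const_mul hd, abs_of_pos (by positivity : 0 < k⁻¹),
        abs_of_nonneg (by positivity)]
      ring
    simp_rw [e1, e2, e3] at h
    have h2 : ∫ x, M |(‖gradient u x‖ / k)| ∂(measOf Ω φ) ≤ 2 * L :=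
      h.trans (by nlinarith)
    have h3 := modular_div hΩ hφ hcs' hsΩ hM.1 (by fun_prop)
      (fun x hx => by rw [gradient_eq_zero hx, norm_zero, zero_div]) (by linarith) h2
    refine csInf_le (lux_bddBelow _ _ _) ⟨by positivity, ?_⟩
    refine le_trans (le_of_eq ?_) h3
    congr 1
    funext x
    congr 1
    rw [abs_div, abs_of_pos hk0, div_div, hk]
    congr 1
    ring
  obtain ⟨a, -, ha, ha'⟩ := exists_seq_tendsto_sInf
    (lux_nonempty hΩ hφ hcs' hsΩ hP (continuous_hess hs) (fun x hx => hess_eq_zero hs hx))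
    (lux_bddBelow P (measOf Ω φ) (hessNormHS u))
  obtain ⟨b, -, hb, hb'⟩ := exists_seq_tendsto_sInf
    (lux_nonempty hΩ hφ hcs' hsΩ hQ hs.continuous (fun x hx => image_eq_zero_of_notMem_tsupport hx))
    (lux_bddBelow Q (measOf Ω φ) u)
  exact ge_of_tendsto' (((ha.mul hb).sqrt).const_mul (2 * L * √B))
    fun m => key (a m) (ha' m) (b m) (hb' m)
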